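/- For every binary head tree T, the left-corner decoder tags2bht, run on the list hexatags(T), succeeds (every stack operation is defined and the final stack contains a single dummy-free tree) and its output equals T. -/

import Mathlib

/-- Binary head trees (BHTs). -/
inductive BHT : Type where
  | leaf : BHT
  | nodeL (l r : BHT) : BHT
  | nodeR (l r : BHT) : BHT

/-- Number of leaves of a BHT. -/
def BHT.numLeaves : BHT → ℕ
  | .leaf => 1
  | .nodeL l r => l.numLeaves + r.numLeaves
  | .nodeR l r => l.numLeaves + r.numLeaves

/-- Head position of a BHT whose span of leaf positions starts at `i`. -/
def BHT.headAt : BHT → ℕ → ℕ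
  | .leaf, i => i
  | .nodeL l _, i => l.headAt i
  | .nodeR l r, i => r.headAt (i + l.numLeaves)

/-- Head position of a BHT placed over positions `0, …, numLeaves - 1`. -/
def BHT.head (T : BHT) : ℕ := T.headAt 0

/-- Arc set of a BHT whose span of leaf positions starts at `i`. -/
def BHT.arcsAt : BHT → ℕ → Set (ℕ × ℕ)
  | .leaf, _ => ∅
  | .nodeL l r, i =>
      insert (l.headAt i, r.headAt (i + l.numLeaves)) (l.arcsAt i ∪ r.arcsAt (i + l.numLeaves))
  | .nodeR l r, i =>
      insert (r.headAt (i + l.numLeaves), l.headAt i) (l.arcsAt i ∪ r.arcsAt (i + l.numLeaves))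

/-- Arc set of a BHT placed over positions `0, …, numLeaves - 1`. -/
def BHT.arcs (T : BHT) : Set (ℕ × ℕ) := T.arcsAt 0

/-- `S` is a subtree of `T` (placed over positions `0, …, numLeaves - 1`) whose
leaf span starts at absolute position `i`. -/
inductive BHT.SubtreeAt : BHT → ℕ → BHT → Prop
  | refl (T : BHT) : BHT.SubtreeAt T 0 T
  | inlL (l r S : BHT) (i : ℕ) : BHT.SubtreeAt l i S → BHT.SubtreeAt (BHT.nodeL l r) i S
  | inrL (l r S : BHT) (i : ℕ) :
      BHT.SubtreeAt r i S → BHT.SubtreeAt (BHT.nodeL l r) (l.numLeaves + i) S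
  | inlR (l r S : BHT) (i : ℕ) : BHT.SubtreeAt l i S → BHT.SubtreeAt (BHT.nodeR l r) i S
  | inrR (l r S : BHT) (i : ℕ) :
      BHT.SubtreeAt r i S → BHT.SubtreeAt (BHT.nodeR l r) (l.numLeaves + i) S

/-- `bht2dep T j = some i` if `i` is the unique position with `(i, j) ∈ arcs T`,
and `none` if `j` has no incoming arc. -/
noncomputable def bht2dep (n : ℕ) (T : BHT) : Fin n → Option (Fin n) := fun j =>
  letI := Classical.dec (∃! i : Fin n, ((i : ℕ), (j : ℕ)) ∈ T.arcs)
  if h : ∃! i : Fin n, ((i : ℕ), (j : ℕ)) ∈ T.arcs then some h.choose else none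

/-- `head` is a dependency tree on `n` words: exactly one root (position with
`head r = none`), and every position reaches the root by iterating `head`. -/
def IsDepTree {n : ℕ} (head : Fin n → Option (Fin n)) : Prop :=
  ∃ r : Fin n, head r = none ∧ (∀ r' : Fin n, head r' = none → r' = r) ∧
    ∀ j : Fin n, Relation.ReflTransGen (fun a b => head a = some b) j r

/-- A dependency tree is projective if every position's set of descendants is an
interval of consecutive positions. -/
def Projective {n : ℕ} (head : Fin n → Option (Fin n)) : Prop :=
  ∀ i : Fin n, ∃ a b : Fin n,
    ∀ j : Fin n, Relation.ReflTransGen (fun x y => head x = some y) j i ↔ (a ≤ j ∧ j ≤ b)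

/-- The six hexatags: `tL`/`tR` are terminal tags (leaf that is a left/right child);
`leftL`/`leftR` are `⇐L`/`⇐R` (internal left child with head-label L/R);
`rightL`/`rightR` are `⇒L`/`⇒R` (internal right child with head-label L/R). -/
inductive Hexatag : Type where
  | tL | tR | leftL | leftR | rightL | rightR
deriving DecidableEq

/-- A hexatag is terminal if it is `tL` or `tR`. -/
def Hexatag.isTerminal : Hexatag → Prop
  | .tL => True
  | .tR => True
  | _ => False

/-- In-order linearization; the Boolean records whether the current subtree is a
right child of its parent (the root counts as a left child by convention). -/
def BHT.hexatagsAux : BHT → Bool → List Hexatag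
  | .leaf, false => [.tL]
  | .leaf, true => [.tR]
  | .nodeL l r, b =>
      l.hexatagsAux false ++ (if b then Hexatag.rightL else Hexatag.leftL) :: r.hexatagsAux true
  | .nodeR l r, b =>
      l.hexatagsAux false ++ (if b then Hexatag.rightR else Hexatag.leftR) :: r.hexatagsAux true

/-- The hexatag linearization of a BHT. -/
def BHT.hexatags (T : BHT) : List Hexatag := T.hexatagsAux false

/-- The tags emitted for the leaves of a BHT, in left-to-right order. -/
def BHT.leafTagsAux : BHT → Bool → List Hexatag
  | .leaf, false => [.tL]
  | .leaf, true => [.tR]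
  | .nodeL l r, _ => l.leafTagsAux false ++ r.leafTagsAux true
  | .nodeR l r, _ => l.leafTagsAux false ++ r.leafTagsAux true

/-- The tags emitted for the leaves of a BHT in left-to-right order (root
counts as a left child by convention). -/
def BHT.leafTags (T : BHT) : List Hexatag := T.leafTagsAux false

/-- Partial BHTs: binary head trees possibly containing a dummy placeholder. -/
inductive PBHT : Type where
  | dummy : PBHT
  | leaf : PBHT
  | nodeL (l r : PBHT) : PBHT
  | nodeR (l r : PBHT) : PBHT
deriving DecidableEq

/-- Does a partial BHT contain a dummy? -/
def PBHT.hasDummy : PBHT → Bool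
  | .dummy => true
  | .leaf => false
  | .nodeL l r => l.hasDummy || r.hasDummy
  | .nodeR l r => l.hasDummy || r.hasDummy

/-- Substitute `u` for the dummy in a partial BHT. -/
def PBHT.subst : PBHT → PBHT → PBHT
  | .dummy, u => u
  | .leaf, _ => .leaf
  | .nodeL l r, u => .nodeL (l.subst u) (r.subst u)
  | .nodeR l r, u => .nodeR (l.subst u) (r.subst u)

/-- One step of the left-corner decoder on a stack of partial BHTs. -/
def hexStep : List PBHT → Hexatag → Option (List PBHT)
  | st, .tL => some (.leaf :: st)
  | t :: st, .tR => if t.hasDummy then some (t.subst .leaf :: st) else none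
  | t :: st, .leftL => some (.nodeL t .dummy :: st)
  | t :: st, .leftR => some (.nodeR t .dummy :: st)
  | t :: u :: st, .rightL =>
      if u.hasDummy then some (u.subst (.nodeL t .dummy) :: st) else none
  | t :: u :: st, .rightR =>
      if u.hasDummy then some (u.subst (.nodeR t .dummy) :: st) else none
  | _, _ => none

/-- The left-corner decoder: run the stack operations; succeed iff every
operation is defined and the final stack is a single dummy-free tree. -/
def tags2bht (τ : List Hexatag) : Option PBHT :=
  match τ.foldlM hexStep ([] : List PBHT) with
  | some [t] => if t.hasDummy then none else some t
  | _ => none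

/-- Embedding of BHTs into partial BHTs. -/
def BHT.toPBHT : BHT → PBHT
  | .leaf => .leaf
  | .nodeL l r => .nodeL l.toPBHT r.toPBHT
  | .nodeR l r => .nodeR l.toPBHT r.toPBHT

/-- Stack-count increment of a hexatag. -/
def Hexatag.delta : Hexatag → ℤ
  | .tL => 1
  | .tR => 0
  | .leftL => 0
  | .leftR => 0
  | .rightL => -1
  | .rightR => -1

/-- Running stack count `sₖ` after the first `k` tags of `τ`. -/
def stackCount (τ : List Hexatag) (k : ℕ) : ℤ :=
  ((τ.take k).map Hexatag.delta).sum

/-- Validity of a hexatag list (0-indexed: Lean index `k` is 1-indexed position `k+1`). -/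
def ValidTags (τ : List Hexatag) : Prop :=
  (τ.length % 2 = 1 ∧
    ∀ k : ℕ, ∀ t : Hexatag, τ[k]? = some t →
      (k % 2 = 0 → t.isTerminal) ∧ (k % 2 = 1 → ¬ t.isTerminal)) ∧
  τ[0]? = some Hexatag.tL ∧
  (∀ k : ℕ, ∀ t : Hexatag, τ[k]? = some t →
    (t = Hexatag.rightL ∨ t = Hexatag.rightR) → 2 ≤ stackCount τ k) ∧
  stackCount τ τ.length = 1

/- The two linearizations of a tree act on the decoder's stack in complementary ways: read as a left
child, it is pushed as a new tree; read as a right child, it is substituted for the dummy of the top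
tree. Each claim needs the other for the subtrees, so the induction is simultaneous. The tag of an
internal node turns its finished left subtree `l` into a corner, `l` with a dummy right child,
which is left on the stack by `⇐X` and grafted onto the tree below by `⇒X`; in both cases the right
subtree then fills the corner's dummy, and associativity of substitution shows that grafting first
makes no difference. -/

namespace PBHT

theorem subst_assoc (t u v : PBHT) : (t.subst u).subst v = t.subst (u.subst v) := by
  induction t with
  | dummy | leaf => rfl
  | nodeL l r ihl ihr | nodeR l r ihl ihr => simp only [subst, ihl, ihr]

theorem hasDummy_subst (t u : PBHT) : (t.subst u).hasDummy = (t.hasDummy && u.hasDummy) := by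
  induction t with
  | dummy | leaf => rfl
  | nodeL l r ihl ihr | nodeR l r ihl ihr =>
    simp only [subst, hasDummy, ihl, ihr, Bool.and_or_distrib_right]

theorem subst_eq_self {t : PBHT} (ht : t.hasDummy = false) (u : PBHT) : t.subst u = t := by
  induction t with
  | dummy => contradiction
  | leaf => rfl
  | nodeL l r ihl ihr | nodeR l r ihl ihr =>
    obtain ⟨hl, hr⟩ := Bool.or_eq_false_iff.mp ht
    simp only [subst, ihl hl, ihr hr]

theorem nodeL_dummy_subst {l : PBHT} (hl : l.hasDummy = false) (r : PBHT) :
    (nodeL l dummy).subst r = nodeL l r := by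
  simp only [subst, subst_eq_self hl]

theorem nodeR_dummy_subst {l : PBHT} (hl : l.hasDummy = false) (r : PBHT) :
    (nodeR l dummy).subst r = nodeR l r := by
  simp only [subst, subst_eq_self hl]

end PBHT

/-- The tags `τ` make the decoder push `t`, whatever the stack. -/
def Pushes (τ : List Hexatag) (t : PBHT) : Prop :=
  ∀ st : List PBHT, τ.foldlM hexStep st = some (t :: st)

/-- The tags `τ` make the decoder substitute `t` for the dummy of the top tree, whatever the stack,
provided that the top tree has a dummy. -/
def FillsDummy (τ : List Hexatag) (t : PBHT) : Prop :=
  ∀ (u : PBHT) (st : List PBHT), u.hasDummy → τ.foldlM hexStep (u :: st) = some (u.subst t :: st)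

section Corner

variable {σ τ : List Hexatag} {x : Hexatag} {l r corner : PBHT}

theorem Pushes.append_cons (hl : Pushes σ l) (hr : FillsDummy τ r) (hcorner : corner.hasDummy)
    (hx : ∀ st, hexStep (l :: st) x = some (corner :: st)) :
    Pushes (σ ++ x :: τ) (corner.subst r) := by
  intro st
  calc (σ ++ x :: τ).foldlM hexStep st
    _ = (x :: τ).foldlM hexStep (l :: st) := by rw [List.foldlM_append, hl]; rfl
    _ = τ.foldlM hexStep (corner :: st) := by rw [List.foldlM_cons, hx]; rfl
    _ = some (corner.subst r :: st) := hr corner st hcorner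

theorem FillsDummy.append_cons (hl : Pushes σ l) (hr : FillsDummy τ r) (hcorner : corner.hasDummy)
    (hx : ∀ u st, u.hasDummy → hexStep (l :: u :: st) x = some (u.subst corner :: st)) :
    FillsDummy (σ ++ x :: τ) (corner.subst r) := by
  intro u st hu
  have hgraft : (u.subst corner).hasDummy := by
    rw [PBHT.hasDummy_subst, hu, hcorner, Bool.and_self]
  calc (σ ++ x :: τ).foldlM hexStep (u :: st)
    _ = (x :: τ).foldlM hexStep (l :: u :: st) := by rw [List.foldlM_append, hl]; rfl
    _ = τ.foldlM hexStep (u.subst corner :: st) := by rw [List.foldlM_cons, hx u st hu]; rfl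
    _ = some ((u.subst corner).subst r :: st) := hr _ st hgraft
    _ = some (u.subst (corner.subst r) :: st) := by rw [PBHT.subst_assoc]

end Corner

theorem pushes_tL : Pushes [.tL] .leaf := fun _ ↦ rfl

theorem fillsDummy_tR : FillsDummy [.tR] .leaf := by
  intro u st hu
  simp [hexStep, hu]

namespace BHT

theorem hasDummy_toPBHT (T : BHT) : T.toPBHT.hasDummy = false := by
  induction T with
  | leaf => rfl
  | nodeL l r ihl ihr | nodeR l r ihl ihr =>
    simp only [toPBHT, PBHT.hasDummy, ihl, ihr, Bool.or_self]

theorem pushes_and_fillsDummy_hexatagsAux (T : BHT) :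
    Pushes (T.hexatagsAux false) T.toPBHT ∧ FillsDummy (T.hexatagsAux true) T.toPBHT := by
  induction T with
  | leaf => exact ⟨pushes_tL, fillsDummy_tR⟩
  | nodeL l r ihl ihr =>
    have hcorner : (PBHT.nodeL l.toPBHT .dummy).hasDummy := Bool.or_true _
    rw [toPBHT, ← PBHT.nodeL_dummy_subst l.hasDummy_toPBHT]
    exact ⟨ihl.1.append_cons ihr.2 hcorner fun _ ↦ rfl,
      .append_cons ihl.1 ihr.2 hcorner fun _ _ hu ↦ if_pos hu⟩
  | nodeR l r ihl ihr =>
    have hcorner : (PBHT.nodeR l.toPBHT .dummy).hasDummy := Bool.or_true _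
    rw [toPBHT, ← PBHT.nodeR_dummy_subst l.hasDummy_toPBHT]
    exact ⟨ihl.1.append_cons ihr.2 hcorner fun _ ↦ rfl,
      .append_cons ihl.1 ihr.2 hcorner fun _ _ hu ↦ if_pos hu⟩

theorem pushes_hexatags (T : BHT) : Pushes T.hexatags T.toPBHT :=
  T.pushes_and_fillsDummy_hexatagsAux.1

end BHT

theorem tags2bht_eq_some {τ : List Hexatag} {t : PBHT} (hτ : Pushes τ t)
    (ht : t.hasDummy = false) : tags2bht τ = some t := by
  simp only [tags2bht, hτ [], ht, Bool.false_eq_true, if_false]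

theorem tags2bht_hexatags (T : BHT) : tags2bht T.hexatags = some T.toPBHT :=
  tags2bht_eq_some T.pushes_hexatags T.hasDummy_toPBHT
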